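/- arXiv:2212.12413 — 9 statements merged into one kernel-verified Lean document; each statement's English description precedes it below -/
import Mathlib

section
/- Let A ⊆ ℝ^k be nonempty and closed under componentwise minimum ∧ and componentwise maximum ∨. Let F, F̄ : A → ℝ satisfy: (i) F̄ is submodular on A, i.e. F̄(a ∧ ā) + F̄(a ∨ ā) ≤ F̄(a) + F̄(ā) for all a, ā ∈ A; (ii) F̄(a) − F̄(a') ≤ F(a) − F(a') for all a, a' ∈ A with a' ≤ a componentwise. Suppose ᾱ ∈ A minimizes F̄ over A and α ∈ A is the unique minimizer of F over A. Then α ≤ ᾱ componentwise. -/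
/-- Topkis-type comparison of minimizers: if `A ⊆ ℝ^k` is nonempty and closed under
componentwise `∧` and `∨`, `F̄` is submodular on `A`, `F̄` has smaller differences than `F`
(`F̄(a) − F̄(a') ≤ F(a) − F(a')` for `a' ≤ a` in `A`), `ᾱ` minimizes `F̄` over `A` and `α`
is the unique minimizer of `F` over `A`, then `α ≤ ᾱ` componentwise. -/
theorem min_le_min_of_submodular {k : ℕ} (A : Set (Fin k → ℝ)) (hAne : A.Nonempty)
    (hAlat : ∀ a ∈ A, ∀ a' ∈ A, a ⊓ a' ∈ A ∧ a ⊔ a' ∈ A)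
    (F Fbar : (Fin k → ℝ) → ℝ)
    (hsub : ∀ a ∈ A, ∀ a' ∈ A, Fbar (a ⊓ a') + Fbar (a ⊔ a') ≤ Fbar a + Fbar a')
    (hdiff : ∀ a ∈ A, ∀ a' ∈ A, a' ≤ a → Fbar a - Fbar a' ≤ F a - F a')
    (αbar : Fin k → ℝ) (hαbarA : αbar ∈ A) (hαbarmin : ∀ a ∈ A, Fbar αbar ≤ Fbar a)
    (α : Fin k → ℝ) (hαA : α ∈ A) (hαmin : ∀ a ∈ A, F α ≤ F a)
    (hαuniq : ∀ a ∈ A, (∀ a' ∈ A, F a ≤ F a') → a = α) :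
    α ≤ αbar := by
  obtain ⟨hinf, hsup⟩ := hAlat α hαA αbar hαbarA
  -- The increment of `F` from `α ⊓ αbar` to `α` dominates that of `Fbar`, which by submodularity
  -- dominates `Fbar (α ⊔ αbar) - Fbar αbar ≥ 0`; so `α ⊓ αbar` also minimizes `F`.
  have hle : F (α ⊓ αbar) ≤ F α := by
    linarith [hsub α hαA αbar hαbarA, hdiff α hαA _ hinf inf_le_left, hαbarmin _ hsup]
  exact inf_eq_left.mp (hαuniq _ hinf fun a ha => hle.trans (hαmin a ha))
end

section
/- Let A = A¹ × ⋯ × A^k ⊆ ℝ^k be a product of closed intervals, let b₂ be a real d × k matrix with nonnegative entries, and let h : ℝ^d × P₂(ℝ^d) × A → ℝ satisfy: (i) for each (x, μ), a ↦ h(x, μ, a) is submodular: h(x, μ, a ∧ ā) + h(x, μ, a ∨ ā) ≤ h(x, μ, a) + h(x, μ, ā) for all a, ā ∈ A; (ii) h has decreasing differences in a and (x, μ): for x ≤ x̄ componentwise, μ ≤st μ̄, and a ≤ ā componentwise, h(x̄, μ̄, ā) − h(x̄, μ̄, a) ≤ h(x, μ, ā) − h(x, μ, a). Suppose that for each (x,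 μ, y) ∈ ℝ^d × P₂(ℝ^d) × ℝ^d the function a ↦ y · (b₂ a) + h(x, μ, a) admits a unique minimizer α̂(x, μ, y) over A. Then α̂ is monotone in the following sense: if x ≤ x̄ componentwise, μ ≤st μ̄, and ȳ ≤ y componentwise, then α̂(x, μ, y) ≤ α̂(x̄, μ̄, ȳ) componentwise. -/
/-!
This is Topkis' monotone comparative statics. Write `a = α̂(x, μ, y)`, `a' = α̂(x', μ', y')` and
let `L y` be the linear form `c ↦ y ⬝ (b₂ c)`. It suffices that `a ⊔ a'` is a minimizer for the
data `(x', μ', y')`, since uniqueness then gives `a ⊔ a' = a'`, i.e. `a ≤ a'`. Decreasing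
differences, submodularity, optimality of `a` against `a ⊓ a'`, and
`a ⊓ a' + a ⊔ a' = a + a'` yield in turn

  `h x' μ' (a ⊔ a') - h x' μ' a' ≤ h x μ (a ⊔ a') - h x μ a' ≤ h x μ a - h x μ (a ⊓ a')`
  `  ≤ L y (a ⊓ a') - L y a = L y a' - L y (a ⊔ a') ≤ L y' a' - L y' (a ⊔ a')`,

where the last step uses `y' ≤ y`, `a' ≤ a ⊔ a'` and `0 ≤ b₂`.
-/

open MeasureTheory

/-- First-order stochastic dominance on Borel measures on `ℝ^d`
(modelled as `Fin d → ℝ` with the componentwise order). -/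
def StochDom {d : ℕ} (μ ν : Measure (Fin d → ℝ)) : Prop :=
  ∀ φ : (Fin d → ℝ) → ℝ, Measurable φ → Monotone φ → (∃ C : ℝ, ∀ x, |φ x| ≤ C) →
    ∫ x, φ x ∂μ ≤ ∫ x, φ x ∂ν

/-- `μ` has a finite second moment (so `μ ∈ P₂(ℝ^d)` when it is a probability measure). -/
def FinSecondMoment {d : ℕ} (μ : Measure (Fin d → ℝ)) : Prop :=
  Integrable (fun x => ∑ i, (x i) ^ 2) μ

/-- `c ↦ y ⬝ (b₂ c)` is a linear form, hence modular on the lattice `ℝ^k`. -/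
lemma linear_inf_add_sup {d k : ℕ} (b₂ : Matrix (Fin d) (Fin k) ℝ) (y : Fin d → ℝ)
    (a a' : Fin k → ℝ) :
    (∑ i, y i * b₂.mulVec (a ⊓ a') i) + (∑ i, y i * b₂.mulVec (a ⊔ a') i) =
      (∑ i, y i * b₂.mulVec a i) + ∑ i, y i * b₂.mulVec a' i := by
  have key : b₂.mulVec (a ⊓ a') + b₂.mulVec (a ⊔ a') = b₂.mulVec a + b₂.mulVec a' := by
    rw [← Matrix.mulVec_add, ← Matrix.mulVec_add, inf_add_sup]
  simp only [← Finset.sum_add_distrib, ← mul_add]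
  exact Finset.sum_congr rfl fun i _ => congrArg (y i * ·) (congrFun key i)

/-- For `b₂` with nonnegative entries, `(y, a) ↦ y ⬝ (b₂ a)` has increasing differences. -/
lemma linear_increasing_differences {d k : ℕ} (b₂ : Matrix (Fin d) (Fin k) ℝ)
    (hb₂ : ∀ i j, 0 ≤ b₂ i j) {y y' : Fin d → ℝ} (hy : y' ≤ y) {a a' : Fin k → ℝ}
    (ha : a ≤ a') :
    (∑ i, y' i * b₂.mulVec a' i) - (∑ i, y' i * b₂.mulVec a i) ≤
      (∑ i, y i * b₂.mulVec a' i) - ∑ i, y i * b₂.mulVec a i := by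
  simp only [← Finset.sum_sub_distrib, ← mul_sub]
  refine Finset.sum_le_sum fun i _ => mul_le_mul_of_nonneg_right (hy i) (sub_nonneg.2 ?_)
  simp only [Matrix.mulVec, dotProduct]
  exact Finset.sum_le_sum fun j _ => mul_le_mul_of_nonneg_left (ha j) (hb₂ i j)

/-- Monotonicity of the minimizer `α̂(x, μ, y)` of `a ↦ y ⬝ (b₂ a) + h(x, μ, a)` over a
product of closed intervals `A ⊆ ℝ^k`, when `b₂` has nonnegative entries, `h` is submodular
in `a` and has decreasing differences in `a` and `(x, μ)`: if `x ≤ x̄`, `μ ≤st μ̄` and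
`ȳ ≤ y`, then `α̂(x, μ, y) ≤ α̂(x̄, μ̄, ȳ)` componentwise. -/
theorem hatAlpha_monotone {d k : ℕ}
    (I : Fin k → Set ℝ) (hI : ∀ i, IsClosed (I i) ∧ (I i).OrdConnected)
    (A : Set (Fin k → ℝ)) (hA : A = Set.univ.pi I)
    (b₂ : Matrix (Fin d) (Fin k) ℝ) (hb₂ : ∀ i j, 0 ≤ b₂ i j)
    (h : (Fin d → ℝ) → Measure (Fin d → ℝ) → (Fin k → ℝ) → ℝ)
    (hsub : ∀ (x : Fin d → ℝ) (μ : Measure (Fin d → ℝ)), IsProbabilityMeasure μ →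
      FinSecondMoment μ → ∀ a ∈ A, ∀ a' ∈ A,
        h x μ (a ⊓ a') + h x μ (a ⊔ a') ≤ h x μ a + h x μ a')
    (hdec : ∀ (x x' : Fin d → ℝ) (μ μ' : Measure (Fin d → ℝ)), x ≤ x' →
      IsProbabilityMeasure μ → FinSecondMoment μ → IsProbabilityMeasure μ' →
      FinSecondMoment μ' → StochDom μ μ' → ∀ a ∈ A, ∀ a' ∈ A, a ≤ a' →
        h x' μ' a' - h x' μ' a ≤ h x μ a' - h x μ a)
    (αhat : (Fin d → ℝ) → Measure (Fin d → ℝ) → (Fin d → ℝ) → (Fin k → ℝ))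
    (hmin : ∀ (x : Fin d → ℝ) (μ : Measure (Fin d → ℝ)) (y : Fin d → ℝ),
      IsProbabilityMeasure μ → FinSecondMoment μ →
      αhat x μ y ∈ A ∧
      (∀ a ∈ A, (∑ i, y i * b₂.mulVec (αhat x μ y) i) + h x μ (αhat x μ y) ≤
        (∑ i, y i * b₂.mulVec a i) + h x μ a) ∧
      (∀ a ∈ A, (∀ a' ∈ A, (∑ i, y i * b₂.mulVec a i) + h x μ a ≤
        (∑ i, y i * b₂.mulVec a' i) + h x μ a') → a = αhat x μ y)) :
    ∀ (x x' : Fin d → ℝ) (μ μ' : Measure (Fin d → ℝ)) (y y' : Fin d → ℝ),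
      x ≤ x' → IsProbabilityMeasure μ → FinSecondMoment μ → IsProbabilityMeasure μ' →
      FinSecondMoment μ' → StochDom μ μ' → y' ≤ y →
      αhat x μ y ≤ αhat x' μ' y' := by
  intro x x' μ μ' y y' hx hμ hμ2 hμ' hμ'2 hst hy
  obtain ⟨haA, ha, -⟩ := hmin x μ y hμ hμ2
  obtain ⟨haA', ha', huniq⟩ := hmin x' μ' y' hμ' hμ'2
  set a := αhat x μ y
  set a' := αhat x' μ' y'
  have hinf : a ⊓ a' ∈ A := by
    rw [hA] at haA haA' ⊢
    intro i hi
    rcases le_total (a i) (a' i) with hle | hle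
    · simpa [hle] using haA i hi
    · simpa [hle] using haA' i hi
  have hsup : a ⊔ a' ∈ A := by
    rw [hA] at haA haA' ⊢
    intro i hi
    rcases le_total (a i) (a' i) with hle | hle
    · simpa [hle] using haA' i hi
    · simpa [hle] using haA i hi
  have h_submod := hsub x μ hμ hμ2 a haA a' haA'
  have h_decr := hdec x x' μ μ' hx hμ hμ2 hμ' hμ'2 hst a' haA' (a ⊔ a') hsup le_sup_right
  have h_opt := ha (a ⊓ a') hinf
  have h_mod := linear_inf_add_sup b₂ y a a'
  have h_incr := linear_increasing_differences b₂ hb₂ hy (le_sup_right : a' ≤ a ⊔ a')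
  exact sup_eq_right.1 (huniq (a ⊔ a') hsup fun c hc => by linarith [ha' c hc])
end

section
/- Let (E, 𝒜, m) be a measure space and let R be a map sending each measurable function f : E → ℝ to a measurable function R(f) : E → ℝ, such that: (i) R is monotone, i.e. if f ≤ g m-almost everywhere then R(f) ≤ R(g) m-almost everywhere; and (ii) there is a constant C ≥ 0 with ∫ (R(f))² dm ≤ C for every measurable f. Then for every sequence (fₙ)ₙ of measurable functions, the pointwise supremum S := supₙ R(fₙ) is m-almost everywhere finite and satisfies ∫ S² dm ≤ 2C (the integral interpreted in [0, ∞], with the square of +∞ equal to +∞). -/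
/-!
Replacing `fₙ` by its running maxima `gₙ = max (f₀, …, fₙ)` makes the sequence `R gₙ` a.e. increasing,
and `R fₙ ≤ R gₙ` a.e. by monotonicity of `R`. By monotone convergence the positive parts satisfy
`∫ supₙ ((R gₙ)⁺)² ≤ C`, and this dominates `∫ (S⁺)²`. The negative part of `S` is at most that of
`R f₀`, so `∫ (S⁻)² ≤ C` too. The two contributions give the constant `2C`, and the integrable
dominating function forces `S < ∞` a.e.
-/

open MeasureTheory

/-- The square of an extended real number, valued in `[0, ∞]`, with `(+∞)² = +∞`
(and `(−∞)² = +∞`). -/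
noncomputable def erealSq (s : EReal) : ENNReal :=
  if s = ⊤ ∨ s = ⊥ then ⊤ else ENNReal.ofReal (s.toReal ^ 2)

/-- Pointwise domination of `S²`, the sum of `(S⁺)²` and `(S⁻)²`, for `S = supₙ aₙ` with `aₙ ≤ bₙ`:
the first summand controls `(S⁺)²` and the second one `(S⁻)²`, because `S ≥ a₀`. -/
lemma erealSq_iSup_le (a b : ℕ → ℝ) (hab : ∀ n, a n ≤ b n) :
    erealSq (⨆ n, ((a n : ℝ) : EReal)) ≤
      (⨆ n, ENNReal.ofReal ((max (b n) 0) ^ 2)) + ENNReal.ofReal ((a 0) ^ 2) := by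
  set T := ⨆ n, ENNReal.ofReal ((max (b n) 0) ^ 2) with hT
  by_cases hTtop : T = ⊤
  · simp [hTtop]
  have h_le : ∀ n, a n ≤ √T.toReal := by
    intro n
    have h1 : ENNReal.ofReal ((max (b n) 0) ^ 2) ≤ T :=
      le_iSup (fun n => ENNReal.ofReal ((max (b n) 0) ^ 2)) n
    exact ((hab n).trans (le_max_left _ 0)).trans
      (Real.le_sqrt_of_sq_le ((ENNReal.ofReal_le_iff_le_toReal hTtop).1 h1))
  have hS : (⨆ n, ((a n : ℝ) : EReal)) ≤ ((√T.toReal : ℝ) : EReal) :=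
    iSup_le fun n => EReal.coe_le_coe_iff.2 (h_le n)
  have hS0 : ((a 0 : ℝ) : EReal) ≤ ⨆ n, ((a n : ℝ) : EReal) :=
    le_iSup (fun n => ((a n : ℝ) : EReal)) 0
  generalize (⨆ n, ((a n : ℝ) : EReal)) = S at hS hS0
  induction S with
  | bot => simp at hS0
  | top => simp at hS
  | coe s =>
    rw [EReal.coe_le_coe_iff] at hS hS0
    simp only [erealSq, EReal.coe_ne_top, EReal.coe_ne_bot, or_self, if_false, EReal.toReal_coe]
    rcases le_total s 0 with hs | hs
    · exact le_add_left (ENNReal.ofReal_le_ofReal (by nlinarith))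
    · refine le_add_right ((ENNReal.ofReal_le_iff_le_toReal hTtop).2 ?_)
      exact (Real.le_sqrt hs ENNReal.toReal_nonneg).1 hS

/-- If `R` maps measurable functions to measurable functions, is monotone (a.e.) and has
uniformly bounded second moments `∫ (R f)² dm ≤ C`, then for any sequence `(fₙ)` of
measurable functions the pointwise supremum `S = supₙ R(fₙ)` (valued in `ℝ ∪ {+∞}`) is
a.e. finite and satisfies `∫ S² dm ≤ 2C`. -/
theorem sq_integral_sup_le {E : Type*} [MeasurableSpace E] (m : Measure E)
    (R : (E → ℝ) → (E → ℝ))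
    (hRmeas : ∀ f : E → ℝ, Measurable f → Measurable (R f))
    (hRmono : ∀ f g : E → ℝ, Measurable f → Measurable g →
      (∀ᵐ x ∂m, f x ≤ g x) → ∀ᵐ x ∂m, R f x ≤ R g x)
    (C : ℝ) (hC : 0 ≤ C)
    (hbound : ∀ f : E → ℝ, Measurable f →
      ∫⁻ x, ENNReal.ofReal ((R f x) ^ 2) ∂m ≤ ENNReal.ofReal C)
    (f : ℕ → E → ℝ) (hf : ∀ n, Measurable (f n)) :
    (∀ᵐ x ∂m, (⨆ n, ((R (f n) x : ℝ) : EReal)) < ⊤) ∧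
      ∫⁻ x, erealSq (⨆ n, ((R (f n) x : ℝ) : EReal)) ∂m ≤ ENNReal.ofReal (2 * C) := by
  have hg : ∀ n, Measurable (partialSups f n) := by
    intro n
    induction n with
    | zero => simpa using hf 0
    | succ n ih => rw [partialSups_add_one]; exact ih.sup (hf (n + 1))
  have hfg : ∀ᵐ x ∂m, ∀ n, R (f n) x ≤ R (partialSups f n) x :=
    ae_all_iff.2 fun n => hRmono _ _ (hf n) (hg n) (ae_of_all _ fun x => le_partialSups f n x)
  have hgg : ∀ᵐ x ∂m, ∀ n, R (partialSups f n) x ≤ R (partialSups f (n + 1)) x :=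
    ae_all_iff.2 fun n => hRmono _ _ (hg n) (hg (n + 1))
      (ae_of_all _ fun x => (partialSups f).monotone n.le_succ x)
  have hHmeas : ∀ n, Measurable
      (fun x => ENNReal.ofReal ((max (R (partialSups f n) x) 0) ^ 2)) := fun n =>
    (((hRmeas _ (hg n)).max measurable_const).pow_const 2).ennreal_ofReal
  have hpos : ∫⁻ x, ⨆ n, ENNReal.ofReal ((max (R (partialSups f n) x) 0) ^ 2) ∂m
      ≤ ENNReal.ofReal C := by
    rw [lintegral_iSup' (fun n => (hHmeas n).aemeasurable)]
    · refine iSup_le fun n => (lintegral_mono fun x => ?_).trans (hbound _ (hg n))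
      refine ENNReal.ofReal_le_ofReal (sq_le_sq.2 ?_)
      rw [abs_of_nonneg (le_max_right _ _)]
      exact max_le (le_abs_self _) (abs_nonneg _)
    · filter_upwards [hgg] with x hx
      refine monotone_nat_of_le_succ fun n => ENNReal.ofReal_le_ofReal ?_
      exact pow_le_pow_left₀ (le_max_right _ _) (max_le_max_right 0 (hx n)) 2
  have hR0meas : Measurable (fun x => ENNReal.ofReal ((R (f 0) x) ^ 2)) :=
    ((hRmeas _ (hf 0)).pow_const 2).ennreal_ofReal
  have hdom : ∫⁻ x, ((⨆ n, ENNReal.ofReal ((max (R (partialSups f n) x) 0) ^ 2)) +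
      ENNReal.ofReal ((R (f 0) x) ^ 2)) ∂m ≤ ENNReal.ofReal (2 * C) := by
    rw [lintegral_add_right _ hR0meas, two_mul, ENNReal.ofReal_add hC hC]
    exact add_le_add hpos (hbound _ (hf 0))
  have hpt : ∀ᵐ x ∂m, erealSq (⨆ n, ((R (f n) x : ℝ) : EReal)) ≤
      (⨆ n, ENNReal.ofReal ((max (R (partialSups f n) x) 0) ^ 2)) +
        ENNReal.ofReal ((R (f 0) x) ^ 2) := by
    filter_upwards [hfg] with x hx
    exact erealSq_iSup_le _ _ hx
  refine ⟨?_, (lintegral_mono_ae hpt).trans hdom⟩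
  filter_upwards [hpt, ae_lt_top ((Measurable.iSup hHmeas).add hR0meas)
    (ne_top_of_le_ne_top ENNReal.ofReal_ne_top hdom)] with x hx hfin
  refine lt_top_iff_ne_top.2 fun htop => ?_
  rw [htop] at hx
  exact absurd (hx.trans_lt hfin) (by simp [erealSq])
end

section
/- Monotonicity of the fictitious play iteration: let R be a map from Borel probability measures on ℝ^d to Borel probability measures on ℝ^d that is monotone with respect to first-order stochastic dominance (μ ≤st ν implies R(μ) ≤st R(ν)). Let μ₁ be a Borel probability measure with μ₁ ≤st R(μ₁), and define recursively μ_{n+1} := (1/(n+1)) R(μₙ) + (n/(n+1)) μₙ for n ≥ 1 (convex combination of measures). Then μₙ ≤st μ_{n+1} for every n ≥ 1. -/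
/-!
The invariant carried along the iteration is `μ n ≤st R (μ n)`. A convex combination of two
ordered measures lies between them (`stochDom_mix_between`), so the invariant gives
`μ n ≤st μ (n + 1) ≤st R (μ n)`. The first inequality is the claim; applying the monotone map `R`
to it gives `R (μ n) ≤st R (μ (n + 1))`, and chaining this with the second inequality yields
the invariant at `n + 1`.
-/

open MeasureTheory
open scoped ENNReal

lemma integral_mix {d : ℕ} {μ ν : Measure (Fin d → ℝ)} [IsProbabilityMeasure μ]
    [IsProbabilityMeasure ν] {a b : ℝ} (ha : 0 ≤ a) (hb : 0 ≤ b) {φ : (Fin d → ℝ) → ℝ}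
    (hφ : Measurable φ) {C : ℝ} (hC : ∀ x, |φ x| ≤ C) :
    ∫ x, φ x ∂(ENNReal.ofReal a • ν + ENNReal.ofReal b • μ) =
      a * ∫ x, φ x ∂ν + b * ∫ x, φ x ∂μ := by
  have hint : ∀ ρ : Measure (Fin d → ℝ), IsProbabilityMeasure ρ → Integrable φ ρ := fun ρ _ =>
    Integrable.of_bound hφ.aestronglyMeasurable C (Filter.Eventually.of_forall hC)
  rw [integral_add_measure ((hint ν inferInstance).smul_measure ENNReal.ofReal_ne_top)
    ((hint μ inferInstance).smul_measure ENNReal.ofReal_ne_top), integral_smul_measure,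
    integral_smul_measure, ENNReal.toReal_ofReal ha, ENNReal.toReal_ofReal hb, smul_eq_mul,
    smul_eq_mul]

lemma isProbabilityMeasure_mix {d : ℕ} {μ ν : Measure (Fin d → ℝ)} [IsProbabilityMeasure μ]
    [IsProbabilityMeasure ν] {a b : ℝ} (ha : 0 ≤ a) (hb : 0 ≤ b) (hab : a + b = 1) :
    IsProbabilityMeasure (ENNReal.ofReal a • ν + ENNReal.ofReal b • μ) := by
  constructor
  simp [← ENNReal.ofReal_add ha hb, hab]

lemma stochDom_mix_between {d : ℕ} {μ ν : Measure (Fin d → ℝ)} [IsProbabilityMeasure μ]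
    [IsProbabilityMeasure ν] {a b : ℝ} (ha : 0 ≤ a) (hb : 0 ≤ b) (hab : a + b = 1)
    (h : StochDom μ ν) :
    StochDom μ (ENNReal.ofReal a • ν + ENNReal.ofReal b • μ) ∧
      StochDom (ENNReal.ofReal a • ν + ENNReal.ofReal b • μ) ν := by
  obtain rfl : b = 1 - a := by linarith
  constructor <;> rintro φ hφ hmono ⟨C, hC⟩ <;> rw [integral_mix ha hb hφ hC] <;>
    have := h φ hφ hmono ⟨C, hC⟩
  · linarith [mul_le_mul_of_nonneg_left this ha]
  · linarith [mul_le_mul_of_nonneg_left this hb]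

/-- Monotonicity of the fictitious play iteration: if `R` maps probability measures to
probability measures, is monotone w.r.t. `≤st`, `μ₁ ≤st R(μ₁)` and
`μ_{n+1} = (1/(n+1)) R(μₙ) + (n/(n+1)) μₙ` for `n ≥ 1`, then `μₙ ≤st μ_{n+1}` for all
`n ≥ 1`. -/
theorem fictitiousPlay_monotone {d : ℕ}
    (R : Measure (Fin d → ℝ) → Measure (Fin d → ℝ))
    (hRprob : ∀ μ : Measure (Fin d → ℝ), IsProbabilityMeasure μ → IsProbabilityMeasure (R μ))
    (hRmono : ∀ μ ν : Measure (Fin d → ℝ), IsProbabilityMeasure μ → IsProbabilityMeasure ν →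
      StochDom μ ν → StochDom (R μ) (R ν))
    (μ : ℕ → Measure (Fin d → ℝ)) (hμ1 : IsProbabilityMeasure (μ 1))
    (hstart : StochDom (μ 1) (R (μ 1)))
    (hrec : ∀ n : ℕ, 1 ≤ n → μ (n + 1) =
      ENNReal.ofReal (1 / ((n : ℝ) + 1)) • R (μ n) +
      ENNReal.ofReal ((n : ℝ) / ((n : ℝ) + 1)) • μ n) :
    ∀ n : ℕ, 1 ≤ n → StochDom (μ n) (μ (n + 1)) := by
  have ha : ∀ n : ℕ, 0 ≤ 1 / ((n : ℝ) + 1) := fun n => by positivity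
  have hb : ∀ n : ℕ, 0 ≤ (n : ℝ) / ((n : ℝ) + 1) := fun n => by positivity
  have hab : ∀ n : ℕ, 1 / ((n : ℝ) + 1) + (n : ℝ) / ((n : ℝ) + 1) = 1 := fun n => by
    have : (n : ℝ) + 1 ≠ 0 := by positivity
    field_simp
    ring
  have hbetween : ∀ n : ℕ, 1 ≤ n → IsProbabilityMeasure (μ n) → StochDom (μ n) (R (μ n)) →
      StochDom (μ n) (μ (n + 1)) ∧ StochDom (μ (n + 1)) (R (μ n)) := by
    intro n hn hp hd
    have := hRprob _ hp
    rw [hrec n hn]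
    exact stochDom_mix_between (ha n) (hb n) (hab n) hd
  have hinv : ∀ n : ℕ, 1 ≤ n → IsProbabilityMeasure (μ n) ∧ StochDom (μ n) (R (μ n)) := by
    intro n hn
    induction n, hn using Nat.le_induction with
    | base => exact ⟨hμ1, hstart⟩
    | succ n hn ih =>
      obtain ⟨hp, hd⟩ := ih
      have hRp := hRprob _ hp
      have hp' : IsProbabilityMeasure (μ (n + 1)) := by
        rw [hrec n hn]
        exact isProbabilityMeasure_mix (ha n) (hb n) (hab n)
      obtain ⟨h1, h2⟩ := hbetween n hn hp hd
      exact ⟨hp', fun φ hφ hmono hC =>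
        (h2 φ hφ hmono hC).trans (hRmono _ _ hp hp' h1 φ hφ hmono hC)⟩
  intro n hn
  exact (hbetween n hn (hinv n hn).1 (hinv n hn).2).1
end

section
/- Mean-field interaction of scalar type preserves submodularity and decreasing differences: let ψ : ℝ^d → ℝ^m be Borel measurable, componentwise nondecreasing, with |ψ(x)| ≤ C(1 + |x|²) for a constant C > 0, and let γ : ℝ^d × ℝ^m → ℝ be such that (i) for each u ∈ ℝ^m, x ↦ γ(x, u) is submodular, and (ii) γ has decreasing differences in x and u: for x ≤ x̄ and u ≤ ū componentwise, γ(x̄, ū) − γ(x, ū) ≤ γ(x̄, u) − γ(x, u). Define φ(x, μ) := γ(x, ∫ ψ dμ) for x ∈ ℝ^d and μ a Borel probability measure on ℝ^d with finite second moment. Then for each such μ, x ↦ φ(x, μ) is submodular, and φ has decreasing differences in x and μ: for x ≤ x̄ componentwise and μ ≤st μ̄ (both with finite second moments), φ(x̄, μ̄) − φ(x, μ̄) ≤ φ(x̄, μ) − φ(x, μ). -/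
/-!
Submodularity in `x` is immediate, since `∫ ψ dμ` is a fixed vector once `μ` is fixed. For the
decreasing differences it suffices, by those of `γ`, that `μ ≤st μ'` implies
`∫ ψ dμ ≤ ∫ ψ dμ'` componentwise. Stochastic dominance only tests *bounded* nondecreasing
functions, while `ψ` has quadratic growth; so each component is truncated at levels `±n`, which
preserves monotonicity, and `n → ∞` is taken by dominated convergence
(`StochDom.integral_le_of_integrable`), the domination coming from the finite second moments
(`integrable_comp_of_growth`).
-/

open MeasureTheory

/-- A function `f : ℝ^d → ℝ` is submodular if
`f(x ∧ y) + f(x ∨ y) ≤ f(x) + f(y)` for all `x, y`. -/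
def Submodular {d : ℕ} (f : (Fin d → ℝ) → ℝ) : Prop :=
  ∀ x y : Fin d → ℝ, f (x ⊓ y) + f (x ⊔ y) ≤ f x + f y

/-- Quadratic growth makes each component of `ψ` integrable against a probability measure with
finite second moment, so that the vector `∫ ψ dμ` carries no junk value. -/
theorem integrable_comp_of_growth {d m : ℕ} {ψ : (Fin d → ℝ) → Fin m → ℝ}
    (hψmeas : Measurable ψ) {C : ℝ}
    (hψgrowth : ∀ x, Real.sqrt (∑ i, (ψ x i) ^ 2) ≤ C * (1 + ∑ i, (x i) ^ 2))
    (μ : Measure (Fin d → ℝ)) [IsProbabilityMeasure μ] (hμ : FinSecondMoment μ) (i : Fin m) :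
    Integrable (fun x => ψ x i) μ := by
  have hg : Integrable (fun x : Fin d → ℝ => C * (1 + ∑ i, (x i) ^ 2)) μ :=
    ((integrable_const (1 : ℝ)).add hμ).const_mul C
  refine hg.mono' ((measurable_pi_apply i).comp hψmeas).aestronglyMeasurable
    (Filter.Eventually.of_forall fun x => ?_)
  refine le_trans ?_ (hψgrowth x)
  rw [Real.norm_eq_abs]
  exact Real.abs_le_sqrt
    (Finset.single_le_sum (f := fun j => (ψ x j) ^ 2) (fun j _ => sq_nonneg _)
      (Finset.mem_univ i))

/-- Integrals of the truncations `max (-n) (min f n)` of an integrable `f` converge to `∫ f`. -/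
theorem tendsto_integral_truncation {d : ℕ} {f : (Fin d → ℝ) → ℝ} (hf : Measurable f)
    (μ : Measure (Fin d → ℝ)) (hμ : Integrable f μ) :
    Filter.Tendsto (fun n : ℕ => ∫ x, max (-(n : ℝ)) (min (f x) n) ∂μ) Filter.atTop
      (nhds (∫ x, f x ∂μ)) := by
  refine tendsto_integral_of_dominated_convergence (fun x => |f x|)
    (fun n => (measurable_const.max (hf.min measurable_const)).aestronglyMeasurable)
    hμ.abs (fun n => Filter.Eventually.of_forall fun x => ?_)
    (Filter.Eventually.of_forall fun x => ?_)
  · have hn : (0 : ℝ) ≤ n := Nat.cast_nonneg n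
    rw [Real.norm_eq_abs, abs_le]
    constructor
    · exact le_max_of_le_right (le_min (neg_abs_le _) (by linarith [abs_nonneg (f x)]))
    · exact max_le (by linarith [abs_nonneg (f x)]) (min_le_of_left_le (le_abs_self _))
  · -- For fixed `x` the truncation is inactive as soon as `|f x| ≤ n`.
    obtain ⟨N, hN⟩ := exists_nat_ge |f x|
    refine tendsto_const_nhds.congr' ?_
    filter_upwards [Filter.eventually_ge_atTop N] with n hn
    have h : |f x| ≤ n := hN.trans (by exact_mod_cast hn)
    rw [min_eq_left (abs_le.mp h).2, max_eq_right (abs_le.mp h).1]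

/-- Stochastic dominance, defined through bounded test functions, extends to integrable
nondecreasing ones. -/
theorem StochDom.integral_le_of_integrable {d : ℕ} {μ μ' : Measure (Fin d → ℝ)}
    (h : StochDom μ μ') {f : (Fin d → ℝ) → ℝ} (hf : Measurable f) (hmono : Monotone f)
    (hμ : Integrable f μ) (hμ' : Integrable f μ') : ∫ x, f x ∂μ ≤ ∫ x, f x ∂μ' := by
  refine le_of_tendsto_of_tendsto' (tendsto_integral_truncation hf μ hμ)
    (tendsto_integral_truncation hf μ' hμ') fun n => ?_
  have hn : (0 : ℝ) ≤ n := Nat.cast_nonneg n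
  refine h _ (measurable_const.max (hf.min measurable_const))
    (fun x y hxy => max_le_max le_rfl (min_le_min (hmono hxy) le_rfl)) ⟨n, fun x => ?_⟩
  exact abs_le.mpr ⟨le_max_left _ _, max_le (by linarith) (min_le_right _ _)⟩

/-- A mean-field interaction of scalar type `φ(x, μ) = γ(x, ∫ ψ dμ)` with `ψ` measurable,
nondecreasing and of quadratic growth, and `γ` submodular in `x` with decreasing differences
in `x` and `u`, is submodular in `x` and has decreasing differences in `x` and `μ`
(w.r.t. first-order stochastic dominance on `P₂(ℝ^d)`). -/
theorem scalarType_submodular_decDiff {d m : ℕ}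
    (ψ : (Fin d → ℝ) → Fin m → ℝ) (hψmeas : Measurable ψ) (hψmono : Monotone ψ)
    (C : ℝ) (hC : 0 < C)
    (hψgrowth : ∀ x, Real.sqrt (∑ i, (ψ x i) ^ 2) ≤ C * (1 + ∑ i, (x i) ^ 2))
    (γ : (Fin d → ℝ) → (Fin m → ℝ) → ℝ)
    (hsub : ∀ u : Fin m → ℝ, Submodular (fun x => γ x u))
    (hdec : ∀ (x x' : Fin d → ℝ) (u u' : Fin m → ℝ), x ≤ x' → u ≤ u' →
      γ x' u' - γ x u' ≤ γ x' u - γ x u) :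
    (∀ μ : Measure (Fin d → ℝ), IsProbabilityMeasure μ → FinSecondMoment μ →
      Submodular (fun x => γ x (fun i => ∫ y, ψ y i ∂μ))) ∧
    (∀ (μ μ' : Measure (Fin d → ℝ)) (x x' : Fin d → ℝ),
      IsProbabilityMeasure μ → FinSecondMoment μ → IsProbabilityMeasure μ' →
      FinSecondMoment μ' → StochDom μ μ' → x ≤ x' →
      γ x' (fun i => ∫ y, ψ y i ∂μ') - γ x (fun i => ∫ y, ψ y i ∂μ') ≤
        γ x' (fun i => ∫ y, ψ y i ∂μ) - γ x (fun i => ∫ y, ψ y i ∂μ)) := by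
  refine ⟨fun μ _ _ => hsub _, fun μ μ' x x' _ hμ _ hμ' hdom hx => hdec x x' _ _ hx fun i => ?_⟩
  exact hdom.integral_le_of_integrable ((measurable_pi_apply i).comp hψmeas)
    (fun a b hab => hψmono hab i)
    (integrable_comp_of_growth hψmeas hψgrowth μ hμ i)
    (integrable_comp_of_growth hψmeas hψgrowth μ' hμ' i)
end

section
/- Mean-field interaction of order 1 preserves submodularity and decreasing differences: let γ : ℝ^d × ℝ^d → ℝ be Borel measurable with |γ(x, y)| ≤ C(1 + |x|² + |y|²) for a constant C > 0, such that (i) for each y, x ↦ γ(x, y) is submodular, and (ii) γ has decreasing differences in x and y: for x ≤ x̄ and y ≤ ȳ componentwise, γ(x̄, ȳ) − γ(x, ȳ) ≤ γ(x̄, y) − γ(x, y). Define φ(x, μ) := ∫ γ(x, y) dμ(y) for x ∈ ℝ^d and μ a Borel probability measure on ℝ^d with finite second moment. Then for each such μ, x ↦ φ(x, μ) is submodular, and φ has decreasing differences in x and μ: for x ≤ x̄ componentwise and μ ≤st μ̄ (both with finite second moments), φ(x̄, μ̄) − φ(x, μ̄) ≤ φ(x̄, μ) − φ(x, μ). -/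
/-!
Submodularity in `x` is a pointwise inequality in `y`, so it survives integration, the quadratic
growth bound making every `γ x ·` integrable. For decreasing differences, fix `x ≤ x'`: the function
`y ↦ γ x y - γ x' y` is nondecreasing and `μ`-integrable, hence its integral increases
along `≤st`. Since stochastic dominance is tested on bounded functions only, this last step needs
the truncation argument of `StochDom.integral_mono`.
-/

open MeasureTheory

/-- Stochastic dominance extends from bounded to integrable monotone test functions: clamp the
function to `[-n, n]`, which keeps it monotone, and let `n → ∞` by dominated convergence. -/
theorem StochDom.integral_mono {d : ℕ} {μ ν : Measure (Fin d → ℝ)} (h : StochDom μ ν)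
    {g : (Fin d → ℝ) → ℝ} (hg : Measurable g) (hmono : Monotone g)
    (hμ : Integrable g μ) (hν : Integrable g ν) : ∫ y, g y ∂μ ≤ ∫ y, g y ∂ν := by
  have habs : ∀ (n : ℕ) (y : Fin d → ℝ), |max (-(n : ℝ)) (min (g y) n)| ≤ |g y| := by
    intro n y
    have hn : (0 : ℝ) ≤ n := n.cast_nonneg
    rw [abs_le]
    refine ⟨?_, max_le (by linarith [abs_nonneg (g y)]) ((min_le_left _ _).trans (le_abs_self _))⟩
    exact le_max_of_le_right (le_min (neg_abs_le _) (by linarith [abs_nonneg (g y)]))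
  have hmeas : ∀ n : ℕ, Measurable fun y => max (-(n : ℝ)) (min (g y) n) := fun n =>
    measurable_const.max (hg.min measurable_const)
  have hlim : ∀ ρ : Measure (Fin d → ℝ), Integrable g ρ →
      Filter.Tendsto (fun n : ℕ => ∫ y, max (-(n : ℝ)) (min (g y) n) ∂ρ) Filter.atTop
        (nhds (∫ y, g y ∂ρ)) := by
    intro ρ hρ
    refine tendsto_integral_of_dominated_convergence (fun y => |g y|)
      (fun n => (hmeas n).aestronglyMeasurable) hρ.abs
      (fun n => Filter.Eventually.of_forall (habs n)) (Filter.Eventually.of_forall fun y => ?_)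
    -- For fixed `y` the clamp is inactive as soon as `|g y| ≤ n`.
    refine tendsto_const_nhds.congr' ?_
    filter_upwards [Filter.eventually_ge_atTop ⌈|g y|⌉₊] with n hn
    have hle := abs_le.mp (Nat.ceil_le.mp hn)
    rw [min_eq_left hle.2, max_eq_right hle.1]
  refine le_of_tendsto_of_tendsto' (hlim μ hμ) (hlim ν hν) fun n => h _ (hmeas n) ?_ ⟨n, ?_⟩
  · exact fun a b hab => max_le_max le_rfl (min_le_min (hmono hab) le_rfl)
  · intro y
    have hn : (0 : ℝ) ≤ n := n.cast_nonneg
    exact abs_le.mpr ⟨le_max_left _ _, max_le (by linarith) (min_le_right _ _)⟩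

/-- A mean-field interaction of order 1, `φ(x, μ) = ∫ γ(x, y) dμ(y)`, with `γ` Borel
measurable of quadratic growth, submodular in `x` and with decreasing differences in `x`
and `y`, is submodular in `x` and has decreasing differences in `x` and `μ` (w.r.t.
first-order stochastic dominance on `P₂(ℝ^d)`). -/
theorem orderOne_submodular_decDiff {d : ℕ}
    (γ : (Fin d → ℝ) → (Fin d → ℝ) → ℝ) (hγmeas : Measurable (Function.uncurry γ))
    (C : ℝ) (hC : 0 < C)
    (hγgrowth : ∀ x y, |γ x y| ≤ C * (1 + (∑ i, (x i) ^ 2) + ∑ i, (y i) ^ 2))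
    (hsub : ∀ y : Fin d → ℝ, Submodular (fun x => γ x y))
    (hdec : ∀ x x' y y' : Fin d → ℝ, x ≤ x' → y ≤ y' →
      γ x' y' - γ x y' ≤ γ x' y - γ x y) :
    (∀ μ : Measure (Fin d → ℝ), IsProbabilityMeasure μ → FinSecondMoment μ →
      Submodular (fun x => ∫ y, γ x y ∂μ)) ∧
    (∀ (μ μ' : Measure (Fin d → ℝ)) (x x' : Fin d → ℝ),
      IsProbabilityMeasure μ → FinSecondMoment μ → IsProbabilityMeasure μ' →
      FinSecondMoment μ' → StochDom μ μ' → x ≤ x' →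
      (∫ y, γ x' y ∂μ') - (∫ y, γ x y ∂μ') ≤ (∫ y, γ x' y ∂μ) - ∫ y, γ x y ∂μ) := by
  have hmeas : ∀ x, Measurable (γ x) := fun x => hγmeas.comp measurable_prodMk_left
  have hint : ∀ μ : Measure (Fin d → ℝ), IsProbabilityMeasure μ → FinSecondMoment μ →
      ∀ x, Integrable (γ x) μ := fun μ _ h2 x =>
    (((integrable_const (1 + ∑ i, (x i) ^ 2)).add h2).const_mul C).mono'
      (hmeas x).aestronglyMeasurable (Filter.Eventually.of_forall fun y => hγgrowth x y)
  refine ⟨fun μ hμ h2 x y => ?_, fun μ μ' x x' hμ h2 hμ' h2' hst hx => ?_⟩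
  · have hi := hint μ hμ h2
    have key := integral_mono ((hi (x ⊓ y)).add (hi (x ⊔ y))) ((hi x).add (hi y))
      (fun z => hsub z x y)
    rwa [integral_add' (hi _) (hi _), integral_add' (hi _) (hi _)] at key
  · have hi := hint μ hμ h2
    have hi' := hint μ' hμ' h2'
    have key := hst.integral_mono (g := fun y => γ x y - γ x' y) ((hmeas x).sub (hmeas x'))
      (fun y y' hy => by have := hdec x x' y y' hx hy; dsimp only; linarith)
      ((hi x).sub (hi x')) ((hi' x).sub (hi' x'))
    rw [integral_sub (hi x) (hi x'), integral_sub (hi' x) (hi' x')] at key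
    linarith
end

section
/- Submodularity of linear-quadratic mean-field costs: let P and Q be real symmetric d × d matrices with P_{ij} + Q_{ij} ≤ 0 for all i ≠ j and Q_{ij} ≥ 0 for all i, j, and let ψ : ℝ^d → ℝ^d be Borel measurable, bounded and componentwise nondecreasing. Define φ(x, μ) := xᵀPx + (x − ∫ ψ dμ)ᵀ Q (x − ∫ ψ dμ) for x ∈ ℝ^d and μ a Borel probability measure on ℝ^d. Then for each μ, x ↦ φ(x, μ) is submodular, and φ has decreasing differences in x and μ: for x ≤ x̄ componentwise and μ ≤st μ̄, φ(x̄, μ̄) − φ(x, μ̄) ≤ φ(x̄, μ) − φ(x, μ). -/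
/-! Both claims hold entry by entry. For submodularity, the `(i, j)` summand of the cost is
`(P i j + Q i j) * x i * x j` plus an affine function of `x`. Affine functions of the coordinates are
modular, since `min a b + max a b = a + b`; the product `x i * x j` is supermodular for `i ≠ j` and
modular for `i = j`, and its coefficient is nonpositive off the diagonal.

For decreasing differences, `μ` enters only through the mean vector `m = ∫ ψ dμ`, which is monotone
for stochastic dominance because each coordinate of `ψ` is a bounded monotone test function. In an
increment in `x`, the part depending on `m` is
`-Q i j * ((x' i - x i) * m j + m i * (x' j - x j))`, which is nonincreasing in `m` as `Q i j ≥ 0`. -/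

open MeasureTheory

/-- The quadratic form `xᵀ M x` of a matrix `M`. -/
def quadForm {d : ℕ} (M : Matrix (Fin d) (Fin d) ℝ) (x : Fin d → ℝ) : ℝ :=
  ∑ i, ∑ j, M i j * x i * x j

/-- The product of two coordinates is supermodular. -/
lemma mul_add_mul_le_min_max (a b c e : ℝ) :
    a * c + b * e ≤ min a b * min c e + max a b * max c e := by
  rcases le_total a b with h | h <;> rcases le_total c e with k | k <;>
    simp only [min_eq_left, min_eq_right, max_eq_left, max_eq_right, h, k] <;>
    nlinarith [mul_nonneg (sub_nonneg.2 h) (sub_nonneg.2 k)]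

lemma mul_self_min_add_max (a b : ℝ) :
    min a b * min a b + max a b * max a b = a * a + b * b := by
  rcases le_total a b with h | h <;> simp [h, add_comm]

lemma submodular_quadForm_add {d : ℕ} (P Q : Matrix (Fin d) (Fin d) ℝ)
    (hPQ : ∀ i j, i ≠ j → P i j + Q i j ≤ 0) (m : Fin d → ℝ) :
    Submodular (fun x => quadForm P x + quadForm Q (x - m)) := by
  intro x y
  simp only [quadForm, ← Finset.sum_add_distrib]
  refine Finset.sum_le_sum fun i _ => Finset.sum_le_sum fun j _ => ?_
  simp only [Pi.sub_apply, Pi.inf_apply, Pi.sup_apply]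
  -- The gap of the bilinear part, weighted by `P i j + Q i j`, carries the whole inequality.
  have key : (P i j + Q i j) * (min (x i) (y i) * min (x j) (y j)
      + max (x i) (y i) * max (x j) (y j) - (x i * x j + y i * y j)) ≤ 0 := by
    rcases eq_or_ne i j with rfl | hij
    · simp [mul_self_min_add_max]
    · exact mul_nonpos_of_nonpos_of_nonneg (hPQ i j hij)
        (sub_nonneg.2 (mul_add_mul_le_min_max _ _ _ _))
  have hi := min_add_max (x i) (y i)
  have hj := min_add_max (x j) (y j)
  linear_combination key - Q i j * m j * hi - Q i j * m i * hj

lemma quadForm_sub_decDiff {d : ℕ} (Q : Matrix (Fin d) (Fin d) ℝ) (hQpos : ∀ i j, 0 ≤ Q i j)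
    {x x' m m' : Fin d → ℝ} (hx : x ≤ x') (hm : m ≤ m') :
    quadForm Q (x' - m') - quadForm Q (x - m') ≤ quadForm Q (x' - m) - quadForm Q (x - m) := by
  simp only [quadForm, ← Finset.sum_sub_distrib]
  refine Finset.sum_le_sum fun i _ => Finset.sum_le_sum fun j _ => ?_
  simp only [Pi.sub_apply]
  have h1 := mul_nonneg (hQpos i j) (mul_nonneg (sub_nonneg.2 (hx i)) (sub_nonneg.2 (hm j)))
  have h2 := mul_nonneg (hQpos i j) (mul_nonneg (sub_nonneg.2 (hm i)) (sub_nonneg.2 (hx j)))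
  linear_combination h1 + h2

/-- Submodularity of linear-quadratic mean-field costs
`φ(x, μ) = xᵀ P x + (x − ∫ ψ dμ)ᵀ Q (x − ∫ ψ dμ)`: if `P, Q` are symmetric with
`P i j + Q i j ≤ 0` off the diagonal and `Q` has nonnegative entries, and `ψ` is
measurable, bounded and nondecreasing, then `φ(·, μ)` is submodular and `φ` has
decreasing differences in `x` and `μ`. -/
theorem lq_meanField_submodular_decDiff {d : ℕ}
    (P Q : Matrix (Fin d) (Fin d) ℝ) (hP : P.IsSymm) (hQ : Q.IsSymm)
    (hPQ : ∀ i j, i ≠ j → P i j + Q i j ≤ 0) (hQpos : ∀ i j, 0 ≤ Q i j)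
    (ψ : (Fin d → ℝ) → Fin d → ℝ) (hψmeas : Measurable ψ) (hψmono : Monotone ψ)
    (hψbdd : ∃ C : ℝ, ∀ x i, |ψ x i| ≤ C) :
    (∀ μ : Measure (Fin d → ℝ), IsProbabilityMeasure μ →
      Submodular (fun x => quadForm P x + quadForm Q (x - fun i => ∫ y, ψ y i ∂μ))) ∧
    (∀ (μ μ' : Measure (Fin d → ℝ)) (x x' : Fin d → ℝ),
      IsProbabilityMeasure μ → IsProbabilityMeasure μ' → StochDom μ μ' → x ≤ x' →
      (quadForm P x' + quadForm Q (x' - fun i => ∫ y, ψ y i ∂μ')) -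
        (quadForm P x + quadForm Q (x - fun i => ∫ y, ψ y i ∂μ')) ≤
      (quadForm P x' + quadForm Q (x' - fun i => ∫ y, ψ y i ∂μ)) -
        (quadForm P x + quadForm Q (x - fun i => ∫ y, ψ y i ∂μ))) := by
  refine ⟨fun μ _ => submodular_quadForm_add P Q hPQ _, fun μ μ' x x' _ _ hdom hx => ?_⟩
  obtain ⟨C, hC⟩ := hψbdd
  have hm : (fun i => ∫ y, ψ y i ∂μ) ≤ fun i => ∫ y, ψ y i ∂μ' := fun i =>
    hdom (fun y => ψ y i) ((measurable_pi_apply i).comp hψmeas) (fun _ _ h => hψmono h i)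
      ⟨C, fun y => hC y i⟩
  linarith [quadForm_sub_decDiff Q hQpos hx hm]
end

section
/- Multiplicative mean-field costs are submodular with decreasing differences: let γ₁ : ℝ^d → ℝ be nonincreasing (x ≤ x̄ componentwise implies γ₁(x̄) ≤ γ₁(x)) and submodular, let γ₂ : ℝ^m → ℝ be nonnegative and componentwise nondecreasing, and let ψ : ℝ^d → ℝ^m be Borel measurable, bounded and componentwise nondecreasing. Define φ(x, μ) := γ₁(x) γ₂(∫ ψ dμ) for x ∈ ℝ^d and μ a Borel probability measure on ℝ^d. Then for each μ, x ↦ φ(x, μ) is submodular, and φ has decreasing differences in x and μ: for x ≤ x̄ componentwise and μ ≤st μ̄, φ(x̄, μ̄) − φ(x, μ̄) ≤ φ(x̄, μ) − φ(x, μ). -/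
/-! For fixed `μ` the factor `γ₂ (∫ ψ dμ)` is a nonnegative constant, and submodularity is preserved by
nonnegative scaling. For decreasing differences, testing `μ ≤st μ'` against each coordinate of `ψ`
gives `∫ ψ dμ ≤ ∫ ψ dμ'`, hence `γ₂ (∫ ψ dμ) ≤ γ₂ (∫ ψ dμ')`; since `γ₁ x' - γ₁ x ≤ 0`,
multiplying it by the larger factor yields the smaller product. -/

open MeasureTheory

/-- Multiplicative mean-field costs `φ(x, μ) = γ₁(x) γ₂(∫ ψ dμ)` with `γ₁` nonincreasing
and submodular, `γ₂` nonnegative and nondecreasing, and `ψ` measurable, bounded and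
nondecreasing, are submodular in `x` and have decreasing differences in `x` and `μ`. -/
theorem multiplicative_submodular_decDiff {d m : ℕ}
    (γ₁ : (Fin d → ℝ) → ℝ) (hγ₁anti : Antitone γ₁) (hγ₁sub : Submodular γ₁)
    (γ₂ : (Fin m → ℝ) → ℝ) (hγ₂nonneg : ∀ u, 0 ≤ γ₂ u) (hγ₂mono : Monotone γ₂)
    (ψ : (Fin d → ℝ) → Fin m → ℝ) (hψmeas : Measurable ψ) (hψmono : Monotone ψ)
    (hψbdd : ∃ C : ℝ, ∀ x i, |ψ x i| ≤ C) :
    (∀ μ : Measure (Fin d → ℝ), IsProbabilityMeasure μ →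
      Submodular (fun x => γ₁ x * γ₂ (fun i => ∫ y, ψ y i ∂μ))) ∧
    (∀ (μ μ' : Measure (Fin d → ℝ)) (x x' : Fin d → ℝ),
      IsProbabilityMeasure μ → IsProbabilityMeasure μ' → StochDom μ μ' → x ≤ x' →
      γ₁ x' * γ₂ (fun i => ∫ y, ψ y i ∂μ') - γ₁ x * γ₂ (fun i => ∫ y, ψ y i ∂μ') ≤
        γ₁ x' * γ₂ (fun i => ∫ y, ψ y i ∂μ) - γ₁ x * γ₂ (fun i => ∫ y, ψ y i ∂μ)) := by
  refine ⟨fun μ _ x y => ?_, fun μ μ' x x' _ _ hμ hx => ?_⟩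
  · have h := mul_le_mul_of_nonneg_right (hγ₁sub x y) (hγ₂nonneg fun i => ∫ y, ψ y i ∂μ)
    simpa only [add_mul] using h
  · obtain ⟨C, hC⟩ := hψbdd
    have hint : (fun i => ∫ y, ψ y i ∂μ) ≤ fun i => ∫ y, ψ y i ∂μ' := fun i =>
      hμ (fun y => ψ y i) ((measurable_pi_apply i).comp hψmeas)
        (fun a b hab => hψmono hab i) ⟨C, fun y => hC y i⟩
    have h := mul_le_mul_of_nonpos_left (hγ₂mono hint) (sub_nonpos.2 (hγ₁anti hx))
    simpa only [sub_mul] using h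
end

section
/- Unique minimizers of strongly convex parametrized functions are Lipschitz in the parameter: let A ⊆ ℝ^k be nonempty, closed and convex, let λ > 0 and K ≥ 0, and let f : ℝ^m × ℝ^k → ℝ be such that (i) for each p ∈ ℝ^m, a ↦ f(p, a) is differentiable with gradient ∇ₐf(p, a), and λ-convex on A: f(p, ā) − f(p, a) − ∇ₐf(p, a) · (ā − a) ≥ λ|ā − a|² for all a, ā ∈ A; and (ii) |∇ₐf(p, a) − ∇ₐf(q, a)| ≤ K|p − q| for all p, q ∈ ℝ^m and a ∈ A. Then for each p ∈ ℝ^m the function f(p, ·) admits a unique minimizer â(p) over A, and the map p ↦ â(p) is Lipschitz with |â(p) − â(q)| ≤ (K/(2λ)) |p − q| for all p, q ∈ ℝ^m. -/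
/-! A `lam`-convex function lies above a parabola touching it at a point of `A`, which makes it
coercive on `A`, so it attains its minimum there. A minimizer `x` satisfies the variational inequality
`⟪∇f x, y - x⟫ ≥ 0` for `y ∈ A` (`inner_gradient_nonneg_of_isMinOn`), and `lam`-convexity then gives
`f y - f x ≥ lam ‖y - x‖ ^ 2`, hence uniqueness. For the Lipschitz bound, let `x`, `y` be the minimizers
for `p`, `q`. Adding the two `lam`-convexity inequalities of `f p` between `x` and `y`, and using
the variational inequalities for `p` at `x` and for `q` at `y`, gives
`2 lam ‖x - y‖ ^ 2 ≤ ⟪∇f_p y - ∇f_q y, y - x⟫ ≤ K ‖p - q‖ ‖x - y‖`. -/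

open scoped RealInnerProductSpace

/-- First-order optimality condition for a minimizer over a convex set. -/
lemma inner_gradient_nonneg_of_isMinOn {E : Type*} [NormedAddCommGroup E]
    [InnerProductSpace ℝ E] [CompleteSpace E] {A : Set E} (hA : Convex ℝ A)
    {f : E → ℝ} {v x y : E} (hf : HasGradientAt f v x) (hx : x ∈ A) (hy : y ∈ A)
    (hmin : IsMinOn f A x) : 0 ≤ ⟪v, y - x⟫ := by
  have h := hmin.localize.hasFDerivWithinAt_nonneg hf.hasFDerivAt.hasFDerivWithinAt
    (sub_mem_posTangentConeAt_of_segment_subset (hA.segment_subset hx hy))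
  simpa using h

/-- A continuous function which lies above a parabola `f a₀ + ⟪v, a - a₀⟫ + lam ‖a - a₀‖ ^ 2` on
a closed set attains its minimum there. -/
lemma exists_isMinOn_of_quadratic_lower_bound {E : Type*} [NormedAddCommGroup E]
    [InnerProductSpace ℝ E] [ProperSpace E] {A : Set E} (hA : IsClosed A)
    {f : E → ℝ} (hf : Continuous f) {lam : ℝ} (hlam : 0 < lam) {v a₀ : E} (ha₀ : a₀ ∈ A)
    (h : ∀ a ∈ A, lam * ‖a - a₀‖ ^ 2 ≤ f a - f a₀ - ⟪v, a - a₀⟫) :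
    ∃ x ∈ A, IsMinOn f A x := by
  refine hf.continuousOn.exists_isMinOn' hA ha₀ ?_
  rw [Filter.eventually_inf_principal]
  -- Outside the ball of radius `‖v‖ / lam` the quadratic term dominates the linear one.
  filter_upwards [(isCompact_closedBall a₀ (‖v‖ / lam)).compl_mem_cocompact] with a ha haA
  have hr : ‖v‖ / lam < ‖a - a₀‖ := by
    simpa [dist_eq_norm] using ha
  rw [div_lt_iff₀ hlam] at hr
  have h1 := h a haA
  have h2 := neg_le_of_abs_le (abs_real_inner_le_norm v (a - a₀))
  nlinarith [mul_le_mul_of_nonneg_right hr.le (norm_nonneg (a - a₀))]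

/-- Unique minimizers of strongly convex parametrized functions are Lipschitz in the
parameter: if `A ⊆ ℝ^k` is nonempty, closed and convex, `a ↦ f(p, a)` is differentiable
with gradient `g(p, a)` and `λ`-convex on `A`, and `p ↦ ∇ₐf(p, a)` is `K`-Lipschitz
uniformly in `a ∈ A`, then for each `p` the function `f(p, ·)` has a unique minimizer
`â(p)` over `A`, and `p ↦ â(p)` is Lipschitz with constant `K/(2λ)`. -/
theorem lipschitz_unique_minimizer {m k : ℕ}
    (A : Set (EuclideanSpace ℝ (Fin k))) (hAne : A.Nonempty) (hAcl : IsClosed A)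
    (hAconv : Convex ℝ A) (lam K : ℝ) (hlam : 0 < lam) (hK : 0 ≤ K)
    (f : EuclideanSpace ℝ (Fin m) → EuclideanSpace ℝ (Fin k) → ℝ)
    (g : EuclideanSpace ℝ (Fin m) → EuclideanSpace ℝ (Fin k) → EuclideanSpace ℝ (Fin k))
    (hgrad : ∀ p a, HasGradientAt (f p) (g p a) a)
    (hconv : ∀ p, ∀ a ∈ A, ∀ a' ∈ A,
      lam * ‖a' - a‖ ^ 2 ≤ f p a' - f p a - ⟪g p a, a' - a⟫)
    (hlip : ∀ p q, ∀ a ∈ A, ‖g p a - g q a‖ ≤ K * ‖p - q‖) :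
    ∃ ahat : EuclideanSpace ℝ (Fin m) → EuclideanSpace ℝ (Fin k),
      (∀ p, ahat p ∈ A ∧ (∀ a ∈ A, f p (ahat p) ≤ f p a) ∧
        (∀ a ∈ A, (∀ a' ∈ A, f p a ≤ f p a') → a = ahat p)) ∧
      (∀ p q, ‖ahat p - ahat q‖ ≤ (K / (2 * lam)) * ‖p - q‖) := by
  have hex : ∀ p, ∃ x ∈ A, IsMinOn (f p) A x := fun p => by
    obtain ⟨a₀, ha₀⟩ := hAne
    exact exists_isMinOn_of_quadratic_lower_bound hAcl
      (continuous_iff_continuousAt.2 fun a => (hgrad p a).hasFDerivAt.continuousAt) hlam ha₀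
      (hconv p a₀ ha₀)
  choose x hxA hmin using hex
  have hvar : ∀ p, ∀ y ∈ A, 0 ≤ ⟪g p (x p), y - x p⟫ := fun p y hy =>
    inner_gradient_nonneg_of_isMinOn hAconv (hgrad p _) (hxA p) hy (hmin p)
  refine ⟨x, fun p => ⟨hxA p, fun a ha => hmin p ha, fun a ha hamin => ?_⟩, fun p q => ?_⟩
  · have h1 := hconv p _ (hxA p) a ha
    have h2 := hvar p a ha
    have h3 := hamin _ (hxA p)
    have h4 : ‖a - x p‖ ^ 2 ≤ 0 := by
      by_contra! h5
      nlinarith [mul_pos hlam h5]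
    have h6 : ‖a - x p‖ = 0 := pow_eq_zero_iff two_ne_zero |>.1 (le_antisymm h4 (sq_nonneg _))
    exact sub_eq_zero.1 (norm_eq_zero.1 h6)
  · have h1 := hconv p _ (hxA p) _ (hxA q)
    have h2 := hconv p _ (hxA q) _ (hxA p)
    have h3 := hvar p _ (hxA q)
    have h4 := hvar q _ (hxA p)
    have h5 := real_inner_le_norm (g p (x q) - g q (x q)) (x q - x p)
    have h6 := mul_le_mul_of_nonneg_right (hlip p q _ (hxA q)) (norm_nonneg (x q - x p))
    rw [inner_sub_left] at h5
    rw [← neg_sub (x q) (x p), inner_neg_right] at h2 h4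
    rw [norm_neg] at h2
    rw [norm_sub_rev (x p)]
    have h7 : 2 * lam * ‖x q - x p‖ ^ 2 ≤ K * ‖p - q‖ * ‖x q - x p‖ := by linarith
    rw [div_mul_eq_mul_div, le_div_iff₀ (by positivity)]
    rcases (norm_nonneg (x q - x p)).eq_or_lt with h0 | h0
    · rw [← h0, zero_mul]
      positivity
    · refine le_of_mul_le_mul_right ?_ h0
      linarith
end
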